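/- Let K be a field and Λ a finite-dimensional associative unital K-algebra. For every finitely generated projective left Λ-module P and every left Λ-module L, there is a K-linear isomorphism Hom_Λ(L, νP) ≅ Hom_K(Hom_Λ(P, L), K), natural in L. -/

import Mathlib

open LinearMap Module

variable (K Λ : Type*) [Field K] [Ring Λ] [Algebra K Λ]

section Nu

variable (P : Type*) [AddCommGroup P] [Module Λ P]

/-- Right multiplication `g ↦ g·a` on `Hom_Λ(P, Λ)`, where `(g·a)(p) = g(p) * a`. -/
def rmul (a : Λ) : (P →ₗ[Λ] Λ) →ₗ[K] (P →ₗ[Λ] Λ) where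
  toFun g :=
    { toFun := fun p => g p * a
      map_add' := fun p q => by simp [add_mul]
      map_smul' := fun c p => by simp [smul_mul_assoc, mul_assoc] }
  map_add' g h := by ext p; simp [add_mul]
  map_smul' k g := by ext p; simp [smul_mul_assoc]

@[simp] lemma rmul_apply (a : Λ) (g : P →ₗ[Λ] Λ) (p : P) :
    rmul K Λ P a g p = g p * a := rfl

lemma rmul_one (g : P →ₗ[Λ] Λ) : rmul K Λ P 1 g = g := by ext p; simp

lemma rmul_mul (a b : Λ) (g : P →ₗ[Λ] Λ) :
    rmul K Λ P (a * b) g = rmul K Λ P b (rmul K Λ P a g) := by ext p; simp [mul_assoc]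

lemma rmul_add' (a b : Λ) (g : P →ₗ[Λ] Λ) :
    rmul K Λ P (a + b) g = rmul K Λ P a g + rmul K Λ P b g := by ext p; simp [mul_add]

lemma rmul_zero' (g : P →ₗ[Λ] Λ) : rmul K Λ P 0 g = 0 := by ext p; simp

lemma rmul_ksmul (k : K) (a : Λ) (g : P →ₗ[Λ] Λ) :
    rmul K Λ P (k • a) g = k • rmul K Λ P a g := by ext p; simp [mul_smul_comm]

/-- `νP`, the `K`-linear dual of the right `Λ`-module `Hom_Λ(P, Λ)`. -/
abbrev Nu := (P →ₗ[Λ] Λ) →ₗ[K] K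

instance : SMul Λ (Nu K Λ P) :=
  ⟨fun a φ => φ.comp (rmul K Λ P a)⟩

@[simp] lemma nu_smul_apply (a : Λ) (φ : Nu K Λ P) (g : P →ₗ[Λ] Λ) :
    (a • φ) g = φ (rmul K Λ P a g) := rfl

/-- The left `Λ`-module structure on `νP` given by `(a • φ)(g) = φ(g · a)`. -/
instance : Module Λ (Nu K Λ P) where
  one_smul φ := by ext g; simp [rmul_one]
  mul_smul a b φ := by ext g; simp [rmul_mul]
  smul_zero a := by ext g; simp
  smul_add a φ ψ := by ext g; simp
  add_smul a b φ := by ext g; simp [rmul_add']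
  zero_smul φ := by ext g; simp [rmul_zero']

instance : IsScalarTower K Λ (Nu K Λ P) :=
  ⟨fun k a φ => by ext g; simp [rmul_ksmul]⟩

instance : SMulCommClass Λ K (Nu K Λ P) :=
  ⟨fun a k φ => by ext g; simp⟩

end Nu

section NuMap

variable (P₁ P₀ : Type*) [AddCommGroup P₁] [Module Λ P₁] [AddCommGroup P₀] [Module Λ P₀]

/-- Precomposition with `f`, as a map `Hom_Λ(P₀, Λ) → Hom_Λ(P₁, Λ)`. -/
def homf (f : P₁ →ₗ[Λ] P₀) : (P₀ →ₗ[Λ] Λ) →ₗ[K] (P₁ →ₗ[Λ] Λ) where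
  toFun g := g.comp f
  map_add' g h := by ext p; simp
  map_smul' k g := by ext p; simp

@[simp] lemma homf_apply (f : P₁ →ₗ[Λ] P₀) (g : P₀ →ₗ[Λ] Λ) (p : P₁) :
    homf K Λ P₁ P₀ f g p = g (f p) := rfl

/-- `νf : νP₁ → νP₀`, the `K`-linear dual of `Hom_Λ(f, Λ)`, as a map of left `Λ`-modules. -/
def nuMap (f : P₁ →ₗ[Λ] P₀) : Nu K Λ P₁ →ₗ[Λ] Nu K Λ P₀ where
  toFun φ := φ.comp (homf K Λ P₁ P₀ f)
  map_add' φ ψ := by ext g; simp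
  map_smul' a φ := by
    ext g
    show φ (rmul K Λ P₁ a (homf K Λ P₁ P₀ f g)) = φ (homf K Λ P₁ P₀ f (rmul K Λ P₀ a g))
    congr 1

end NuMap

universe v

/-- A finitely generated projective module has a finite dual basis. -/
lemma exists_finite_dualBasis (R P : Type*) [Ring R] [AddCommGroup P] [Module R P]
    [Module.Finite R P] [Module.Projective R P] :
    ∃ (n : ℕ) (x : Fin n → P) (c : Fin n → P →ₗ[R] R), ∀ p, ∑ i, c i p • x i = p := by
  obtain ⟨n, f, g, -, -, hfg⟩ := Module.Finite.exists_comp_eq_id_of_projective R P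
  refine ⟨n, fun i => f fun j => if i = j then 1 else 0, fun i => (LinearMap.proj i).comp g,
    fun p => ?_⟩
  exact (pi_apply_eq_sum_univ f (g p)).symm.trans (LinearMap.congr_fun hfg p)

section NuHomEquiv

variable (P : Type*) [AddCommGroup P] [Module Λ P]
variable (L : Type*) [AddCommGroup L] [Module Λ L] [Module K L]
  [IsScalarTower K Λ L] [SMulCommClass Λ K L]

/-- The map `c ↦ (p ↦ c(p) • l)` from `Hom_Λ(P, Λ)` to `Hom_Λ(P, L)`. -/
def smulRightHom (l : L) : (P →ₗ[Λ] Λ) →ₗ[K] (P →ₗ[Λ] L) where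
  toFun c := c.smulRight l
  map_add' c d := by ext p; simp [add_smul]
  map_smul' k c := by ext p; simp

@[simp] lemma smulRightHom_apply (l : L) (c : P →ₗ[Λ] Λ) (p : P) :
    smulRightHom K Λ P L l c p = c p • l := rfl

/-- The map `Hom_K(Hom_Λ(P, L), K) → Hom_Λ(L, νP)` sending `χ` to
`l ↦ (c ↦ χ(p ↦ c(p) • l))`. -/
def dualHomToNu (χ : (P →ₗ[Λ] L) →ₗ[K] K) : L →ₗ[Λ] Nu K Λ P where
  toFun l := χ.comp (smulRightHom K Λ P L l)
  map_add' l m := by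
    ext c
    simp only [LinearMap.comp_apply, LinearMap.add_apply, ← map_add]
    congr 1
    ext p
    simp
  map_smul' a l := by
    ext c
    simp only [LinearMap.comp_apply, RingHom.id_apply, nu_smul_apply]
    congr 1
    ext p
    simp [mul_smul]

variable {P} {n : ℕ} (x : Fin n → P) (c : Fin n → P →ₗ[Λ] Λ)

/-- The map `Hom_Λ(L, νP) → Hom_K(Hom_Λ(P, L), K)` sending `ψ` to
`h ↦ ∑ i, ψ(h(x i))(c i)`. -/
def nuHomToDual : (L →ₗ[Λ] Nu K Λ P) →ₗ[K] ((P →ₗ[Λ] L) →ₗ[K] K) where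
  toFun ψ :=
    { toFun := fun h => ∑ i, ψ (h (x i)) (c i)
      map_add' := fun h h' => by simp [Finset.sum_add_distrib]
      map_smul' := fun k h => by
        simp [Finset.mul_sum, LinearMap.map_smul_of_tower ψ k] }
  map_add' ψ ψ' := by ext h; simp [Finset.sum_add_distrib]
  map_smul' k ψ := by ext h; simp [Finset.mul_sum]

/-- A finite dual basis of `P` makes `nuHomToDual` an isomorphism with inverse `dualHomToNu`. -/
def nuHomEquiv (hxc : ∀ p, ∑ i, c i p • x i = p) :
    (L →ₗ[Λ] Nu K Λ P) ≃ₗ[K] ((P →ₗ[Λ] L) →ₗ[K] K) where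
  __ := nuHomToDual K Λ L x c
  invFun := dualHomToNu K Λ P L
  left_inv ψ := by
    ext l d
    change ∑ i, ψ (d (x i) • l) (c i) = ψ l d
    simp only [map_smul, nu_smul_apply, ← map_sum]
    congr 1
    ext p
    conv_rhs => rw [← hxc p]
    simp
  right_inv χ := by
    ext h
    change ∑ i, χ (smulRightHom K Λ P L (h (x i)) (c i)) = χ h
    rw [← map_sum]
    congr 1
    ext p
    conv_rhs => rw [← hxc p]
    simp

@[simp] lemma nuHomEquiv_apply (hxc : ∀ p, ∑ i, c i p • x i = p) (ψ : L →ₗ[Λ] Nu K Λ P)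
    (h : P →ₗ[Λ] L) : nuHomEquiv K Λ L x c hxc ψ h = ∑ i, ψ (h (x i)) (c i) := rfl

end NuHomEquiv

/-- **Tensor-hom/duality isomorphism.**  For every finitely generated projective left
`Λ`-module `P` and every left `Λ`-module `L` there is a `K`-linear isomorphism
`Hom_Λ(L, νP) ≅ Hom_K(Hom_Λ(P, L), K)`, natural in `L`. -/
theorem stmt3 [FiniteDimensional K Λ]
    (P : Type*) [AddCommGroup P] [Module Λ P] [Module.Finite Λ P] [Module.Projective Λ P] :
    ∃ e : ∀ (L : Type v) [AddCommGroup L] [Module Λ L] [Module K L]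
        [IsScalarTower K Λ L] [SMulCommClass Λ K L],
        (L →ₗ[Λ] Nu K Λ P) ≃ₗ[K] ((P →ₗ[Λ] L) →ₗ[K] K),
      ∀ (L L' : Type v)
        [AddCommGroup L] [Module Λ L] [Module K L]
        [IsScalarTower K Λ L] [SMulCommClass Λ K L]
        [AddCommGroup L'] [Module Λ L'] [Module K L']
        [IsScalarTower K Λ L'] [SMulCommClass Λ K L']
        (g : L →ₗ[Λ] L') (ψ : L' →ₗ[Λ] Nu K Λ P) (h : P →ₗ[Λ] L),
        e L (ψ.comp g) h = e L' ψ (g.comp h) := by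
  obtain ⟨n, x, c, hxc⟩ := exists_finite_dualBasis Λ P
  exact ⟨fun L => nuHomEquiv K Λ L x c hxc, fun L L' => by simp⟩
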